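/- (Theorem 1) Let T ≥ 2, let σ be a permutation of {1, …, T} that can be written as a composition of N adjacent transpositions, let p̂₀ ∈ Ω, and let L₁, …, L_T be losses (with the relevant Bayes updates well defined). Then D(p̂₀[L₁, …, L_T], p̂₀[L_{σ(1)}, …, L_{σ(T)}]) ≤ 2Nε · C^{T−2} · (C² − 1)/(C − 1). -/

import Mathlib

/-!
Exact Bayes updates commute. By (7) and the triangle inequality, running the filter instead of the
exact updates over a block of `n` losses costs at most `ε (1 + C + ⋯ + C ^ (n - 1))`, so reordering
a block moves the filter by at most twice that amount. For a block of two adjacent losses this is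
`2 ε (C ^ 2 - 1) / (C - 1)`, and by (6) the at most `T - 2` later updates amplify it by at most
`C ^ (T - 2)`. The `N` adjacent transpositions are then added up by the triangle inequality.
-/

open MeasureTheory

/-- The exact Bayes update of a Borel measure `p` on `ℝ^d` by a loss `L`:
the measure with density `x ↦ e^{-L x} / ∫ e^{-L x'} dp(x')` with respect to `p`
(defined when `∫ e^{-L} dp > 0`). -/
noncomputable def bayesUpdate {d : ℕ} (p : Measure (EuclideanSpace ℝ (Fin d)))
    (L : EuclideanSpace ℝ (Fin d) → ℝ) : Measure (EuclideanSpace ℝ (Fin d)) :=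
  p.withDensity fun x =>
    ENNReal.ofReal (Real.exp (-(L x)) / ∫ x', Real.exp (-(L x')) ∂p)

open scoped NNReal List

theorem lipschitzWith_foldl {Ω Λ : Type*} [PseudoEMetricSpace Ω] {U : Ω → Λ → Ω} {K : ℝ≥0}
    (hU : ∀ a, LipschitzWith K (U · a)) :
    ∀ l : List Λ, LipschitzWith (K ^ l.length) fun p => l.foldl U p
  | [] => LipschitzWith.id
  | a :: l => (lipschitzWith_foldl hU l).comp (hU a)

section ApproximateUpdate

variable {Ω Λ : Type*} [PseudoMetricSpace Ω] {U B : Ω → Λ → Ω} {K : ℝ≥0} {ε : ℝ}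

theorem dist_foldl_foldl_le (hUB : ∀ p q a, dist (U p a) (B q a) ≤ K * dist p q + ε)
    (p : Ω) (l : List Λ) :
    dist (l.foldl U p) (l.foldl B p) ≤ (∑ i ∈ Finset.range l.length, (K : ℝ) ^ i) * ε := by
  induction l using List.reverseRecOn with
  | nil => simp
  | append_singleton l a ih =>
    simp only [List.foldl_append, List.foldl_cons, List.foldl_nil, List.length_append,
      List.length_singleton]
    calc
      dist (U (l.foldl U p) a) (B (l.foldl B p) a)
        ≤ K * dist (l.foldl U p) (l.foldl B p) + ε := hUB _ _ _
      _ ≤ K * ((∑ i ∈ Finset.range l.length, (K : ℝ) ^ i) * ε) + ε := by gcongr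
      _ = (∑ i ∈ Finset.range (l.length + 1), (K : ℝ) ^ i) * ε := by
        rw [geom_sum_succ]
        ring

theorem dist_foldl_le_of_perm [RightCommutative B]
    (hUB : ∀ p q a, dist (U p a) (B q a) ≤ K * dist p q + ε)
    (p : Ω) {l l' : List Λ} (h : l ~ l') :
    dist (l.foldl U p) (l'.foldl U p) ≤
      2 * ((∑ i ∈ Finset.range l.length, (K : ℝ) ^ i) * ε) := by
  have hl := dist_foldl_foldl_le hUB p l
  have hl' := dist_foldl_foldl_le hUB p l'
  rw [← h.foldl_eq (f := B), ← h.length_eq] at hl'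
  linarith [dist_triangle_right (l.foldl U p) (l'.foldl U p) (l.foldl B p)]

theorem dist_foldl_append_swap_le [RightCommutative B] (hU : ∀ a, LipschitzWith K (U · a))
    (hUB : ∀ p q a, dist (U p a) (B q a) ≤ K * dist p q + ε)
    (p : Ω) (l₁ l₂ : List Λ) (a b : Λ) :
    dist ((l₁ ++ a :: b :: l₂).foldl U p) ((l₁ ++ b :: a :: l₂).foldl U p) ≤
      K ^ l₂.length * (2 * ((K + 1) * ε)) := by
  have hswap (q : Ω) : dist (U (U q a) b) (U (U q b) a) ≤ 2 * ((K + 1) * ε) := by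
    simpa [Finset.sum_range_succ, add_comm] using
      dist_foldl_le_of_perm hUB q (List.Perm.swap b a [])
  simp only [List.foldl_append, List.foldl_cons]
  calc
    _ ≤ ((K ^ l₂.length : ℝ≥0) : ℝ) * _ := (lipschitzWith_foldl hU l₂).dist_le_mul _ _
    _ ≤ K ^ l₂.length * (2 * ((K + 1) * ε)) := by
      push_cast
      gcongr
      exact hswap _

end ApproximateUpdate

section AdjacentTransposition

/-- `τ` is an adjacent transposition `(m m+1)` of `{0, …, T - 1}`. -/
def IsAdjacentSwap {T : ℕ} (τ : Equiv.Perm (Fin T)) : Prop :=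
  ∃ (m : ℕ) (hm : m + 1 < T), τ = Equiv.swap ⟨m, Nat.lt_of_succ_lt hm⟩ ⟨m + 1, hm⟩

variable {α : Type*} {T m : ℕ}

theorem ofFn_eq_take_append_drop (f : Fin T → α) (hm : m + 1 < T) :
    List.ofFn f = (List.ofFn f).take m ++
      f ⟨m, Nat.lt_of_succ_lt hm⟩ :: f ⟨m + 1, hm⟩ :: (List.ofFn f).drop (m + 2) := by
  conv_lhs => rw [← List.take_append_drop m (List.ofFn f),
    List.drop_eq_getElem_cons (by grind), List.drop_eq_getElem_cons (by simpa)]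
  simp only [List.getElem_ofFn]

theorem ofFn_comp_swap_eq_take_append_drop (f : Fin T → α) (hm : m + 1 < T) :
    List.ofFn (f ∘ Equiv.swap ⟨m, Nat.lt_of_succ_lt hm⟩ ⟨m + 1, hm⟩) = (List.ofFn f).take m ++
      f ⟨m + 1, hm⟩ :: f ⟨m, Nat.lt_of_succ_lt hm⟩ :: (List.ofFn f).drop (m + 2) := by
  set τ := Equiv.swap (⟨m, Nat.lt_of_succ_lt hm⟩ : Fin T) ⟨m + 1, hm⟩
  have hfix (i : Fin T) (h₁ : (i : ℕ) ≠ m) (h₂ : (i : ℕ) ≠ m + 1) : τ i = i :=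
    Equiv.swap_apply_of_ne_of_ne (Fin.ne_of_val_ne h₁) (Fin.ne_of_val_ne h₂)
  have htake : (List.ofFn (f ∘ τ)).take m = (List.ofFn f).take m := by
    refine List.ext_getElem (by simp) fun i hi _ => ?_
    simp [hfix ⟨i, by grind⟩ (by grind) (by grind)]
  have hdrop : (List.ofFn (f ∘ τ)).drop (m + 2) = (List.ofFn f).drop (m + 2) := by
    refine List.ext_getElem (by simp) fun i hi _ => ?_
    simp [hfix ⟨m + 2 + i, by grind⟩ (by grind) (by grind)]
  rw [ofFn_eq_take_append_drop (f ∘ τ) hm, htake, hdrop]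
  simp [τ]

theorem dist_comp_list_prod_le {Ω ι : Type*} [PseudoMetricSpace Ω] {F : (ι → α) → Ω} {δ : ℝ}
    {l : List (Equiv.Perm ι)} (h : ∀ τ ∈ l, ∀ f, dist (F f) (F (f ∘ τ)) ≤ δ) (f : ι → α) :
    dist (F f) (F (f ∘ l.prod)) ≤ l.length * δ := by
  induction l generalizing f with
  | nil => simp
  | cons τ l ih =>
    rw [List.forall_mem_cons] at h
    calc
      dist (F f) (F (f ∘ (τ :: l).prod))
        ≤ dist (F f) (F (f ∘ τ)) + dist (F (f ∘ τ)) (F ((f ∘ τ) ∘ l.prod)) := by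
          simpa [Function.comp_assoc] using dist_triangle _ _ _
      _ ≤ δ + l.length * δ := add_le_add (h.1 f) (ih h.2 (f ∘ τ))
      _ = (τ :: l).length * δ := by
        push_cast [List.length_cons]
        ring

end AdjacentTransposition

theorem dist_foldl_ofFn_comp_le_of_isAdjacentSwap {Ω Λ : Type*} [PseudoMetricSpace Ω]
    {U B : Ω → Λ → Ω} [RightCommutative B] {K : ℝ≥0} {ε : ℝ} (hK : 1 ≤ K)
    (hU : ∀ a, LipschitzWith K (U · a))
    (hUB : ∀ p q a, dist (U p a) (B q a) ≤ K * dist p q + ε) (p : Ω)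
    {T : ℕ} {τ : Equiv.Perm (Fin T)} (hτ : IsAdjacentSwap τ) (L : Fin T → Λ) :
    dist ((List.ofFn L).foldl U p) ((List.ofFn (L ∘ τ)).foldl U p) ≤
      K ^ (T - 2) * (2 * ((K + 1) * ε)) := by
  obtain ⟨m, hm, rfl⟩ := hτ
  have hε : 0 ≤ ε := by simpa using dist_nonneg.trans (hUB p p (L ⟨m, by lia⟩))
  rw [ofFn_comp_swap_eq_take_append_drop]
  conv_lhs => enter [1, 3]; rw [ofFn_eq_take_append_drop L hm]
  refine (dist_foldl_append_swap_le hU hUB p _ _ _ _).trans ?_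
  gcongr
  grind

theorem particleFilter_permutation_invariance_general {Ω Λ : Type*} [PseudoMetricSpace Ω]
    {U B : Ω → Λ → Ω} [RightCommutative B] {K : ℝ≥0} {ε : ℝ} (hK : 1 ≤ K)
    (hU : ∀ a, LipschitzWith K (U · a))
    (hUB : ∀ p q a, dist (U p a) (B q a) ≤ K * dist p q + ε) (p : Ω)
    {T : ℕ} (L : Fin T → Λ) {l : List (Equiv.Perm (Fin T))} (hl : ∀ τ ∈ l, IsAdjacentSwap τ) :
    dist ((List.ofFn L).foldl U p) ((List.ofFn (L ∘ l.prod)).foldl U p) ≤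
      l.length * (K ^ (T - 2) * (2 * ((K + 1) * ε))) :=
  dist_comp_list_prod_le (F := fun L => (List.ofFn L).foldl U p)
    (fun _ hτ => dist_foldl_ofFn_comp_le_of_isAdjacentSwap hK hU hUB p (hl _ hτ)) L

section ProbabilityMeasure

variable {X : Type*} [MeasurableSpace X]

/-- The loss functions on `X`: nonnegative measurable functions `X → ℝ`. -/
abbrev Loss (X : Type*) [MeasurableSpace X] : Type _ :=
  {L : X → ℝ // Measurable L ∧ ∀ x, 0 ≤ L x}

theorem Loss.integrable_exp_neg (L : Loss X) (μ : Measure X) [IsFiniteMeasure μ] :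
    Integrable (fun x => Real.exp (-L.1 x)) μ :=
  .of_bound L.2.1.neg.exp.aestronglyMeasurable 1 (.of_forall fun x => by simpa using L.2.2 x)

/-- The exact Bayes update of a probability measure by a loss, as an exponential tilting; on `ℝ^d`
its underlying measure is definitionally `bayesUpdate`. Since losses are nonnegative,
`∫ e^{-L} dp` is finite and positive, so the update is always a probability measure. -/
noncomputable def exactUpdate (p : ProbabilityMeasure X) (L : Loss X) : ProbabilityMeasure X :=
  ⟨(p : Measure X).tilted fun x => -L.1 x, isProbabilityMeasure_tilted (L.integrable_exp_neg p)⟩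

instance : RightCommutative (exactUpdate (X := X)) where
  right_comm p a b :=
    Subtype.ext (tilted_comm (a.integrable_exp_neg p) (b.integrable_exp_neg p))

/-- A discrepancy measure, viewed as a pseudometric on the space of probability measures. -/
abbrev discrepancyPseudoMetricSpace (D : Measure X → Measure X → ℝ)
    (hD_refl : ∀ p, IsProbabilityMeasure p → D p p = 0)
    (hD_symm : ∀ p q, IsProbabilityMeasure p → IsProbabilityMeasure q → D p q = D q p)
    (hD_tri : ∀ p q r, IsProbabilityMeasure p → IsProbabilityMeasure q →
      IsProbabilityMeasure r → D p q ≤ D p r + D r q) :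
    PseudoMetricSpace (ProbabilityMeasure X) where
  dist p q := D p q
  dist_self p := hD_refl p p.2
  dist_comm p q := hD_symm p q p.2 q.2
  dist_triangle p q r := hD_tri p r q p.2 r.2 q.2

/-- An update rule on measures that preserves probability measures, restricted to these. -/
def restrictUpdate (U : Measure X → (X → ℝ) → Measure X)
    (hU : ∀ p L, IsProbabilityMeasure p → Measurable L → (∀ x, 0 ≤ L x) →
      IsProbabilityMeasure (U p L))
    (p : ProbabilityMeasure X) (L : Loss X) : ProbabilityMeasure X :=
  ⟨U p L.1, hU p L.1 p.2 L.2.1 L.2.2⟩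

theorem coe_foldl_restrictUpdate {U : Measure X → (X → ℝ) → Measure X}
    (hU : ∀ p L, IsProbabilityMeasure p → Measurable L → (∀ x, 0 ≤ L x) →
      IsProbabilityMeasure (U p L)) (p : ProbabilityMeasure X) (l : List (Loss X)) :
    (l.foldl (restrictUpdate U hU) p).toMeasure = (l.map Subtype.val).foldl U p := by
  rw [List.foldl_map]
  exact (List.foldl_hom _ fun _ _ => rfl).symm

end ProbabilityMeasure

/-- Theorem 1: if the permutation `σ` of the `T ≥ 2` loss indices can be written as a
composition of `N` adjacent transpositions, then
`D(p̂₀[L₁,…,L_T], p̂₀[L_{σ(1)},…,L_{σ(T)}]) ≤ 2Nε·C^{T−2}·(C² − 1)/(C − 1)`. -/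
theorem particleFilter_permutation_invariance
    {d : ℕ}
    -- discrepancy measure `D` on the space `Ω` of Borel probability measures on `ℝ^d`
    (D : Measure (EuclideanSpace ℝ (Fin d)) → Measure (EuclideanSpace ℝ (Fin d)) → ℝ)
    (hD_nonneg : ∀ p q, IsProbabilityMeasure p → IsProbabilityMeasure q → 0 ≤ D p q)
    (hD_symm : ∀ p q, IsProbabilityMeasure p → IsProbabilityMeasure q → D p q = D q p)
    (hD_tri : ∀ p q r, IsProbabilityMeasure p → IsProbabilityMeasure q →
      IsProbabilityMeasure r → D p q ≤ D p r + D r q)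
    (hD_refl : ∀ p, IsProbabilityMeasure p → D p p = 0)
    -- particle-filter update `U`, sending `phat ∈ Ω` and a loss `L` to `U phat L ∈ Ω`
    (U : Measure (EuclideanSpace ℝ (Fin d)) → (EuclideanSpace ℝ (Fin d) → ℝ) →
      Measure (EuclideanSpace ℝ (Fin d)))
    (hU_prob : ∀ p L, IsProbabilityMeasure p → Measurable L → (∀ x, 0 ≤ L x) →
      IsProbabilityMeasure (U p L))
    -- constants
    (C ε : ℝ) (hC : 1 < C) (hε : 0 ≤ ε)
    -- assumption (6)
    (h6 : ∀ p q L, IsProbabilityMeasure p → IsProbabilityMeasure q → Measurable L →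
      (∀ x, 0 ≤ L x) → D (U p L) (U q L) ≤ C * D p q)
    -- assumption (7)
    (h7 : ∀ phat p L, IsProbabilityMeasure phat → IsProbabilityMeasure p → Measurable L →
      (∀ x, 0 ≤ L x) → 0 < ∫ x, Real.exp (-(L x)) ∂p →
      D (U phat L) (bayesUpdate p L) ≤ C * D phat p + ε)
    -- a probability measure and `T ≥ 2` losses
    (phat₀ : Measure (EuclideanSpace ℝ (Fin d))) (hphat₀ : IsProbabilityMeasure phat₀)
    {T : ℕ} (hT : 2 ≤ T)
    (L : Fin T → EuclideanSpace ℝ (Fin d) → ℝ)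
    (hmeas : ∀ t, Measurable (L t)) (hnonneg : ∀ t x, 0 ≤ L t x)
    -- the relevant Bayes updates are well defined
    (hwd : ∀ t : Fin T, ∀ q : Measure (EuclideanSpace ℝ (Fin d)), IsProbabilityMeasure q →
      0 < ∫ x, Real.exp (-(L t x)) ∂q)
    -- `σ` is a composition of `N` adjacent transpositions
    (σ : Equiv.Perm (Fin T)) (N : ℕ)
    (hσ : ∃ l : List (Equiv.Perm (Fin T)), l.length = N ∧
      (∀ τ ∈ l, ∃ (m : ℕ) (hm : m + 1 < T),
        τ = Equiv.swap (⟨m, Nat.lt_of_succ_lt hm⟩ : Fin T) (⟨m + 1, hm⟩ : Fin T)) ∧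
      σ = l.prod) :
    D (List.foldl U phat₀ (List.ofFn L))
        (List.foldl U phat₀ (List.ofFn fun t => L (σ t))) ≤
      2 * N * ε * C ^ (T - 2) * (C ^ 2 - 1) / (C - 1) := by
  obtain ⟨l, rfl, hl, rfl⟩ := hσ
  let _ := discrepancyPseudoMetricSpace D hD_refl hD_symm hD_tri
  lift C to ℝ≥0 using zero_le_one.trans hC.le
  lift L to Fin T → Loss (EuclideanSpace ℝ (Fin d)) using fun t => ⟨hmeas t, hnonneg t⟩
  obtain ⟨p₀, rfl⟩ : ∃ p₀ : ProbabilityMeasure _, p₀.toMeasure = phat₀ := ⟨⟨_, hphat₀⟩, rfl⟩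
  have hlip (a : Loss _) : LipschitzWith C (restrictUpdate U hU_prob · a) :=
    .of_dist_le_mul fun p q => h6 p q a.1 p.2 q.2 a.2.1 a.2.2
  have happrox (p q : ProbabilityMeasure _) (a : Loss _) :
      dist (restrictUpdate U hU_prob p a) (exactUpdate q a) ≤ C * dist p q + ε :=
    h7 p q a.1 p.2 q.2 a.2.1 a.2.2 (integral_exp_pos (a.integrable_exp_neg q))
  have hgeom : ((C : ℝ) ^ 2 - 1) / (C - 1) = C + 1 := by
    rw [div_eq_iff (sub_pos.2 hC).ne']
    ring
  have hbound := particleFilter_permutation_invariance_general hC.le hlip happrox p₀ L hl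
  change D _ _ ≤ _ at hbound
  simp only [coe_foldl_restrictUpdate, List.map_ofFn] at hbound
  rw [mul_div_assoc, hgeom]
  exact hbound.trans_eq (by ring)
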